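/- Let D be a negative integer with D ≡ 0 or 1 (mod 4), let f(x,y) = a x² + b x y + c y² be a primitive positive definite integral binary quadratic form of discriminant D, let n be a positive integer, and let p be a prime not dividing D such that f represents n p². If f does not represent n, then the Kronecker symbol (D/p) = 1; that is, either p is odd and D is a nonzero square modulo p, or p = 2 and D ≡ 1 (mod 8). -/

import Mathlib

/-!
If `p` divided both coordinates of a representation of `n p²` by `f = a x² + b x y + c y²`, dividing
them by `p` would represent `n`. So `f` has a nontrivial zero modulo `p`, and over a field a
nontrivial zero makes the discriminant a square. Modulo `2` being a square says nothing; there one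
uses that `x² + x y + y²` has no nontrivial zero over `𝔽₂`. Since `b` is odd, the nontrivial zero
forces `a c` to be even, whence `b² - 4 a c ≡ 1 (mod 8)`.
-/

/-- The value at `(x, y)` of the binary quadratic form with coefficients `a`, `b`, `c`. The middle
coefficient is `b`, not `2b`, so that the discriminant of the form is `discrim a b c`. -/
def binaryForm {R : Type*} [Semiring R] (a b c x y : R) : R :=
  a * x ^ 2 + b * x * y + c * y ^ 2

section CommSemiring

variable {R : Type*} [CommSemiring R]

theorem binaryForm_swap (a b c x y : R) : binaryForm c b a y x = binaryForm a b c x y := by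
  unfold binaryForm
  ring

theorem binaryForm_mul_mul (a b c k x y : R) :
    binaryForm a b c (k * x) (k * y) = binaryForm a b c x y * k ^ 2 := by
  unfold binaryForm
  ring

theorem not_dvd_and_dvd_of_binaryForm_eq_mul_sq [IsCancelMulZero R] {a b c k n x y : R}
    (hk : k ≠ 0) (hrep : binaryForm a b c x y = n * k ^ 2)
    (hnrep : ¬ ∃ x y, binaryForm a b c x y = n) : ¬ (k ∣ x ∧ k ∣ y) := by
  rintro ⟨⟨u, rfl⟩, ⟨v, rfl⟩⟩
  rw [binaryForm_mul_mul] at hrep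
  exact hnrep ⟨u, v, mul_right_cancel₀ (pow_ne_zero 2 hk) hrep⟩

end CommSemiring

theorem map_binaryForm {R S : Type*} [Semiring R] [Semiring S] (φ : R →+* S) (a b c x y : R) :
    φ (binaryForm a b c x y) = binaryForm (φ a) (φ b) (φ c) (φ x) (φ y) := by
  simp [binaryForm]

theorem discrim_swap {R : Type*} [CommRing R] (a b c : R) : discrim c b a = discrim a b c := by
  unfold discrim
  ring

theorem map_discrim {R S : Type*} [Ring R] [Ring S] (φ : R →+* S) (a b c : R) :
    φ (discrim a b c) = discrim (φ a) (φ b) (φ c) := by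
  simp [discrim, map_ofNat]

section Field

variable {K : Type*} [Field K] {a b c x y : K}

theorem isSquare_discrim_of_binaryForm_eq_zero_of_ne_zero (h : binaryForm a b c x y = 0)
    (hy : y ≠ 0) : IsSquare (discrim a b c) := by
  have hroot : a * (x / y * (x / y)) + b * (x / y) + c = 0 := by
    unfold binaryForm at h
    field_simp
    linear_combination h
  exact ⟨_, (discrim_eq_sq_of_quadratic_eq_zero hroot).trans (sq _)⟩

theorem isSquare_discrim_of_binaryForm_eq_zero (h : binaryForm a b c x y = 0)
    (hxy : ¬ (x = 0 ∧ y = 0)) : IsSquare (discrim a b c) := by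
  by_cases hy : y = 0
  · have hx : x ≠ 0 := fun hx => hxy ⟨hx, hy⟩
    rw [← discrim_swap]
    rw [← binaryForm_swap] at h
    exact isSquare_discrim_of_binaryForm_eq_zero_of_ne_zero h hx
  · exact isSquare_discrim_of_binaryForm_eq_zero_of_ne_zero h hy

end Field

theorem isSquare_intCast_discrim_of_dvd_binaryForm {p : ℕ} [Fact p.Prime] {a b c x y : ℤ}
    (h : (p : ℤ) ∣ binaryForm a b c x y) (hxy : ¬ ((p : ℤ) ∣ x ∧ (p : ℤ) ∣ y)) :
    IsSquare ((discrim a b c : ℤ) : ZMod p) := by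
  simp only [← ZMod.intCast_zmod_eq_zero_iff_dvd] at h hxy
  rw [← eq_intCast (Int.castRingHom (ZMod p))] at h ⊢
  rw [map_binaryForm] at h
  rw [map_discrim]
  exact isSquare_discrim_of_binaryForm_eq_zero h hxy

section Parity

variable {a b c x y : ℤ}

theorem odd_discrim_iff : Odd (discrim a b c) ↔ Odd b := by
  simp [discrim, mul_assoc, Int.odd_sub, Int.odd_pow, show Even (4 : ℤ) by decide]

theorem discrim_emod_eight_eq_one (hb : Odd b) (hac : Even (a * c)) : discrim a b c % 8 = 1 := by
  have hb8 : 8 ∣ b ^ 2 - 1 := Int.eight_dvd_sq_sub_one_of_odd hb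
  obtain ⟨m, hm⟩ := hac
  rw [discrim, mul_assoc, hm]
  omega

theorem even_binaryForm_iff_of_odd (ha : Odd a) (hb : Odd b) (hc : Odd c) :
    Even (binaryForm a b c x y) ↔ Even x ∧ Even y := by
  rw [← Int.not_even_iff_odd] at ha hb hc
  simp only [binaryForm, Int.even_add, Int.even_mul, Int.even_pow]
  tauto

theorem even_mul_of_even_binaryForm (h : Even (binaryForm a b c x y)) (hb : Odd b)
    (hxy : ¬ (Even x ∧ Even y)) : Even (a * c) := by
  by_contra hac
  obtain ⟨ha, hc⟩ : Odd a ∧ Odd c := Int.odd_mul.mp (Int.not_even_iff_odd.mp hac)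
  exact hxy ((even_binaryForm_iff_of_odd ha hb hc).mp h)

end Parity

theorem kronecker_one_of_rep_np_sq_not_rep_n_general (a b c n : ℤ) (p : ℕ) (hp : p.Prime)
    (hpD : ¬ (p : ℤ) ∣ discrim a b c)
    (hrep : ∃ x y : ℤ, binaryForm a b c x y = n * (p : ℤ) ^ 2)
    (hnrep : ¬ ∃ x y : ℤ, binaryForm a b c x y = n) :
    (Odd p ∧ ((discrim a b c : ℤ) : ZMod p) ≠ 0 ∧ IsSquare ((discrim a b c : ℤ) : ZMod p)) ∨
      (p = 2 ∧ discrim a b c % 8 = 1) := by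
  obtain ⟨x, y, h⟩ := hrep
  have hxy : ¬ ((p : ℤ) ∣ x ∧ (p : ℤ) ∣ y) :=
    not_dvd_and_dvd_of_binaryForm_eq_mul_sq (mod_cast hp.ne_zero) h hnrep
  have hdvd : (p : ℤ) ∣ binaryForm a b c x y := h ▸ (dvd_pow_self _ two_ne_zero).mul_left n
  rcases hp.eq_two_or_odd' with rfl | hodd
  · simp only [Nat.cast_ofNat, ← even_iff_two_dvd, Int.not_even_iff_odd] at hpD hdvd hxy
    have hb : Odd b := odd_discrim_iff.mp hpD
    exact .inr ⟨rfl, discrim_emod_eight_eq_one hb (even_mul_of_even_binaryForm hdvd hb hxy)⟩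
  · have : Fact p.Prime := ⟨hp⟩
    exact .inl ⟨hodd, mt (ZMod.intCast_zmod_eq_zero_iff_dvd _ p).mp hpD,
      isSquare_intCast_discrim_of_dvd_binaryForm hdvd hxy⟩

/-- If a primitive positive definite integral binary quadratic form `f` of
discriminant `D < 0`, `D ≡ 0, 1 (mod 4)`, represents `n * p ^ 2` for a prime `p ∤ D`,
but does not represent `n`, then the Kronecker symbol `(D/p) = 1`, i.e. either `p` is
odd and `D` is a nonzero square mod `p`, or `p = 2` and `D ≡ 1 (mod 8)`. -/
theorem kronecker_one_of_rep_np_sq_not_rep_n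
    (D : ℤ) (hDneg : D < 0) (hDmod : D % 4 = 0 ∨ D % 4 = 1)
    (a b c : ℤ) (ha : 0 < a) (hprim : Int.gcd a (Int.gcd b c) = 1)
    (hD : b ^ 2 - 4 * a * c = D)
    (n : ℤ) (hn : 0 < n) (p : ℕ) (hp : p.Prime) (hpD : ¬ (p : ℤ) ∣ D)
    (hrep : ∃ x y : ℤ, a * x ^ 2 + b * x * y + c * y ^ 2 = n * (p : ℤ) ^ 2)
    (hnrep : ¬ ∃ x y : ℤ, a * x ^ 2 + b * x * y + c * y ^ 2 = n) :
    (Odd p ∧ (D : ZMod p) ≠ 0 ∧ IsSquare (D : ZMod p)) ∨ (p = 2 ∧ D % 8 = 1) := by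
  subst hD
  exact kronecker_one_of_rep_np_sq_not_rep_n_general a b c n p hp hpD hrep hnrep
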